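/- If w_1 > w_2 > … > w_n > 0, then the generalized Gini index G_w is strictly increasing with respect to Pareto dominance: for all v, v' ∈ ℝ^n, if v_i ≥ v'_i for every i ∈ {1,…,n} and v_j > v'_j for some j, then G_w(v) > G_w(v'). -/

import Mathlib

/-- The vector `v` rearranged in nondecreasing order. -/
noncomputable def sortedVec {n : ℕ} (v : Fin n → ℝ) : Fin n → ℝ := v ∘ Tuple.sort v

/-- Ordered weighted average: `OWA_w(v) = ∑ₖ w_k v↑_k`. -/
noncomputable def OWA {n : ℕ} (w v : Fin n → ℝ) : ℝ := ∑ k, w k * sortedVec v k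

/-- `Lorenz v k` is the k-th Lorenz component, the sum of the k smallest components of v. -/
noncomputable def Lorenz {n : ℕ} (v : Fin n → ℝ) (k : ℕ) : ℝ :=
  ∑ i : Fin n, if (i : ℕ) < k then sortedVec v i else 0

/-- `wprime w k = w_k - w_{k+1}` with the convention `w_{n+1} = 0` (0-indexed). -/
noncomputable def wprime {n : ℕ} (w : Fin n → ℝ) (k : Fin n) : ℝ :=
  w k - (if h : (k : ℕ) + 1 < n then w ⟨(k : ℕ) + 1, h⟩ else 0)

/-!
Sorting is strictly monotone for the componentwise order, because the (0-indexed) `k`-th smallest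
entry of a tuple is at most `a` exactly when more than `k` entries are at most `a`, and raising
entries can only lower these counts. A weighted sum with positive weights then preserves the strict
inequality between the sorted tuples.
-/

open scoped Finset

theorem card_filter_le_lt_card_filter_le {ι α : Type*} [Fintype ι] [Preorder α] [DecidableLE α]
    {u v : ι → α} (huv : u ≤ v) {j : ι} (hj : u j < v j) :
    #{i | v i ≤ u j} < #{i | u i ≤ u j} := by
  have subset : ({i | v i ≤ u j} : Finset ι) ⊆ ({i | u i ≤ u j} : Finset ι) :=
    Finset.monotone_filter_right _ fun i _ hi ↦ (huv i).trans hi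
  refine Finset.card_lt_card <| (Finset.ssubset_iff_of_subset subset).2 ⟨j, ?_, ?_⟩
  · exact (Finset.mem_filter_univ j).2 le_rfl
  · exact fun j_mem ↦ hj.not_ge <| (Finset.mem_filter_univ j).1 j_mem

section SortedTuples

variable {n : ℕ} {α : Type*} [LinearOrder α]

theorem lt_card_filter_le_iff_comp_sort_le (v : Fin n → α) (a : α) (k : Fin n) :
    (k : ℕ) < #{i | v i ≤ a} ↔ (v ∘ Tuple.sort v) k ≤ a := by
  have card_comp_sort : #{i | (v ∘ Tuple.sort v) i ≤ a} = #{i | v i ≤ a} :=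
    Finset.card_equiv (Tuple.sort v) fun i ↦ by
      simp only [Finset.mem_filter_univ, Function.comp_apply]
  rw [← card_comp_sort, Tuple.lt_card_le_iff_apply_le_of_monotone (Tuple.monotone_sort v)]

theorem monotone_comp_sort : Monotone fun v : Fin n → α ↦ v ∘ Tuple.sort v := by
  intro u v huv k
  have card_le : #{i | v i ≤ (v ∘ Tuple.sort v) k} ≤ #{i | u i ≤ (v ∘ Tuple.sort v) k} :=
    Finset.card_le_card <| Finset.monotone_filter_right _ fun i _ hi ↦ (huv i).trans hi
  exact (lt_card_filter_le_iff_comp_sort_le u _ k).1 <|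
    ((lt_card_filter_le_iff_comp_sort_le v _ k).2 le_rfl).trans_le card_le

theorem strictMono_comp_sort : StrictMono fun v : Fin n → α ↦ v ∘ Tuple.sort v := by
  intro u v huv
  obtain ⟨hle, j, hj⟩ := Pi.lt_def.1 huv
  have card_lt : #{i | v i ≤ u j} < #{i | u i ≤ u j} := card_filter_le_lt_card_filter_le hle hj
  let k : Fin n := ⟨#{i | v i ≤ u j}, card_lt.trans_le (card_finset_fin_le _)⟩
  have sorted_u_le : (u ∘ Tuple.sort u) k ≤ u j :=
    (lt_card_filter_le_iff_comp_sort_le u _ k).1 card_lt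
  have lt_sorted_v : u j < (v ∘ Tuple.sort v) k :=
    not_le.1 <| (lt_card_filter_le_iff_comp_sort_le v _ k).not.1 (lt_irrefl _)
  exact Pi.lt_def.2 ⟨monotone_comp_sort hle, k, sorted_u_le.trans_lt lt_sorted_v⟩

end SortedTuples

theorem strictMono_sum_mul_left {ι R : Type*} [Fintype ι] [NonUnitalNonAssocSemiring R]
    [PartialOrder R] [IsOrderedCancelAddMonoid R] [PosMulStrictMono R] {w : ι → R}
    (hw : ∀ i, 0 < w i) : StrictMono fun v : ι → R ↦ ∑ i, w i * v i := by
  intro u v huv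
  obtain ⟨hle, j, hj⟩ := Pi.lt_def.1 huv
  exact Finset.sum_lt_sum (fun i _ ↦ mul_le_mul_of_nonneg_left (hle i) (hw i).le)
    ⟨j, Finset.mem_univ j, mul_lt_mul_of_pos_left hj (hw j)⟩

theorem stmt3_general {n : ℕ} {w : Fin n → ℝ} (hw : ∀ k, 0 < w k) : StrictMono (OWA w) :=
  (strictMono_sum_mul_left hw).comp strictMono_comp_sort

/-- for strictly decreasing positive weights, the generalized Gini index
`G_w = OWA_w` is strictly increasing with respect to Pareto dominance. -/
theorem stmt3 {n : ℕ} (w : Fin n → ℝ) (hw : StrictAnti w) (hwpos : ∀ k, 0 < w k)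
    (v v' : Fin n → ℝ) (hdom : ∀ i, v' i ≤ v i) (j : Fin n) (hj : v' j < v j) :
    OWA w v' < OWA w v :=
  stmt3_general hwpos <| Pi.lt_def.2 ⟨hdom, j, hj⟩
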